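/- arXiv:2203.15742 — 2 statements merged into one kernel-verified Lean document; each statement's English description precedes it below -/
import Mathlib

section
/- Let G be a finite simple graph on n vertices with vertex connectivity κ and independence number α. If κ + α = n, then th_H(G) = ⌈2·√(n − κ) + κ − 1⌉ = ⌈n − α + 2·√α − 1⌉. -/
/-!
Write `n`, `κ`, `α` for the order, the vertex connectivity and the independence number of `G`.

*Lower bound, valid for every graph.* The number `D` of blue vertices that have not yet forced
never changes, as each force makes one new blue vertex and uses up one old one; so `D = |B|`.
In a round with at least one force, let `A` be the set of vertices that have forced up to and
including this round. No vertex of `A` has a white neighbor, so the blue vertices outside `A`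
separate `A` from the white ones, and there are at least `κ` of them. Hence a round makes at most
`D - κ` forces (`Round.card_forces`), and `t` rounds suffice only if
`n - κ ≤ (|B| - κ) * (t + 1)` (`Reach.card_bound`). By the AM-GM inequality
`2 * √(n - κ) ≤ |B| - κ + t + 1`.

*Upper bound, valid for every graph with `n - α` in place of `κ`.* Let `I` be a maximum independent
set and color blue its complement together with `b` vertices of `I`. All neighbors of vertices of
`I` are blue, so `b` forces can be made in each round (`exists_reach_univ`), and
`s - 1` further rounds suffice as soon as `α ≤ b * s`. With `m = ⌈2 * √α⌉` the choice
`b = ⌊m / 2⌋`, `s = ⌈m / 2⌉` gives the cost `n - α + m - 1`.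
When `κ + α = n` the two bounds agree.
-/

namespace Hopping

variable {V : Type*} [DecidableEq V]

/-- One round of simultaneous hopping forces.  A state is a pair `(blue, used)`
consisting of the set of blue vertices and the set of vertices that have already
performed a force.  In one round, a collection `F` of forces `(v, w)` is
performed simultaneously: each forcing vertex `v` is blue, has not yet performed
a force, and has all of its neighbors blue; each forced vertex `w` is white;
distinct forces have distinct forcing vertices and distinct forced vertices. -/
def Round (G : SimpleGraph V) (S T : Finset V × Finset V) : Prop :=
  ∃ F : Finset (V × V),
    (∀ p ∈ F, p.1 ∈ S.1 ∧ p.1 ∉ S.2 ∧ (∀ w, G.Adj p.1 w → w ∈ S.1) ∧ p.2 ∉ S.1) ∧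
    (∀ p ∈ F, ∀ q ∈ F, p ≠ q → p.1 ≠ q.1 ∧ p.2 ≠ q.2) ∧
    T.1 = S.1 ∪ F.image Prod.snd ∧ T.2 = S.2 ∪ F.image Prod.fst

/-- `Reach G t S T` means that state `T` is reachable from state `S` in exactly
`t` rounds of simultaneous hopping forces. -/
def Reach (G : SimpleGraph V) : ℕ → Finset V × Finset V → Finset V × Finset V → Prop
  | 0, S, T => S = T
  | t + 1, S, T => ∃ U, Round G S U ∧ Reach G t U T

variable [Fintype V]

/-- `B` is a hopping forcing set of `G`: starting with exactly the vertices of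
`B` blue (and no vertex having performed a force), some sequence of hopping
forces colors every vertex blue. -/
def IsForcingSet (G : SimpleGraph V) (B : Finset V) : Prop :=
  ∃ t T, Reach G t (B, ∅) T ∧ T.1 = Finset.univ

/-- The hopping forcing number `H(G)`: the minimum size of a hopping forcing set. -/
noncomputable def forcingNumber (G : SimpleGraph V) : ℕ :=
  sInf {k | ∃ B : Finset V, B.card = k ∧ IsForcingSet G B}

/-- The hopping propagation time `pt_H(G; B)`: the least number of rounds of
simultaneous hopping forces needed to color every vertex blue starting from `B`,
or `∞` if `B` is not a hopping forcing set. -/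
noncomputable def propTime (G : SimpleGraph V) (B : Finset V) : ℕ∞ :=
  sInf {t : ℕ∞ | ∃ t' : ℕ, t = (t' : ℕ∞) ∧ ∃ T, Reach G t' (B, ∅) T ∧ T.1 = Finset.univ}

/-- The hopping throttling number `th_H(G) = min_B (|B| + pt_H(G;B))`. -/
noncomputable def throttling (G : SimpleGraph V) : ℕ∞ :=
  ⨅ B : Finset V, ((B.card : ℕ∞) + propTime G B)

end Hopping

namespace Hopping

/-- The vertex connectivity of `G`: the minimum number of vertices whose
deletion disconnects `G` or leaves a single vertex. -/
noncomputable def vertexConnectivity {V : Type*} [Fintype V] [DecidableEq V]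
    (G : SimpleGraph V) : ℕ :=
  sInf {k | ∃ S : Finset V, S.card = k ∧
    (¬ (G.induce ((↑S)ᶜ : Set V)).Connected ∨ (Sᶜ : Finset V).card = 1)}

end Hopping

namespace Hopping

/-- The independence number of `G`: the maximum size of a set of pairwise
non-adjacent vertices. -/
noncomputable def indepNumber {V : Type*} [Fintype V] (G : SimpleGraph V) : ℕ :=
  sSup {k | ∃ S : Finset V, S.card = k ∧ ∀ u ∈ S, ∀ v ∈ S, u ≠ v → ¬ G.Adj u v}

end Hopping

namespace Hopping

/-! ### Maximum independent sets -/

lemma exists_maximum_indep {V : Type*} [Fintype V] (G : SimpleGraph V) :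
    ∃ I : Finset V, I.card = indepNumber G ∧ ∀ u ∈ I, ∀ v ∈ I, u ≠ v → ¬ G.Adj u v := by
  refine Nat.sSup_mem (s := {k | ∃ S : Finset V, S.card = k ∧
    ∀ u ∈ S, ∀ v ∈ S, u ≠ v → ¬ G.Adj u v}) ⟨0, ∅, by simp⟩ ⟨Fintype.card V, ?_⟩
  rintro k ⟨S, rfl, -⟩
  exact Finset.card_le_univ S

lemma indepNumber_pos {V : Type*} [Fintype V] [Nonempty V] (G : SimpleGraph V) : 0 < indepNumber G := by
  refine Nat.lt_of_lt_of_le Nat.zero_lt_one (le_csSup ⟨Fintype.card V, ?_⟩ ?_)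
  · rintro k ⟨S, rfl, -⟩
    exact Finset.card_le_univ S
  · exact ⟨{Classical.arbitrary V}, by simp⟩

/-! ### The lower bound -/

section

variable {V : Type*} [DecidableEq V]

/-- A state is valid if every vertex that has forced is blue and has only blue neighbors. -/
def Valid (G : SimpleGraph V) (S : Finset V × Finset V) : Prop :=
  S.2 ⊆ S.1 ∧ ∀ v ∈ S.2, ∀ w, G.Adj v w → w ∈ S.1

variable [Fintype V]

/-- If `P` is preserved along edges avoiding `X`, and holds at some vertex outside `X` but not
at another, then deleting `X` disconnects `G`, so `X` has at least `κ` vertices. -/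
lemma vertexConnectivity_le_of_separates (G : SimpleGraph V) (X : Finset V) (P : V → Prop)
    {a w : V} (ha : a ∉ X) (hw : w ∉ X) (hPa : P a) (hPw : ¬ P w)
    (hP : ∀ u v, u ∉ X → v ∉ X → G.Adj u v → P u → P v) :
    vertexConnectivity G ≤ X.card := by
  refine Nat.sInf_le ⟨X, rfl, Or.inl fun hc => hPw ?_⟩
  have hreach := hc.preconnected ⟨a, by simpa using ha⟩ ⟨w, by simpa using hw⟩
  obtain ⟨p⟩ := hreach
  have key : ∀ {x y : ((↑X)ᶜ : Set V)}, (G.induce ((↑X)ᶜ : Set V)).Walk x y → P x → P y := by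
    intro x y q
    induction q with
    | nil => exact id
    | @cons x y z hxy _ ih =>
      intro hx
      exact ih (hP x y (fun h => x.2 (Finset.mem_coe.2 h)) (fun h => y.2 (Finset.mem_coe.2 h)) hxy hx)
  exact key p hPa

/-- The effect of one round with `k` forces: blue and used vertices both grow by `k`, and
either `k = 0` or at least `κ` of the unused blue vertices do not force in this round. -/
lemma Round.card_forces {G : SimpleGraph V} {S T : Finset V × Finset V}
    (hR : Round G S T) (hS : Valid G S) :
    Valid G T ∧ ∃ k, T.1.card = S.1.card + k ∧ T.2.card = S.2.card + k ∧
      (k = 0 ∨ S.2.card + k + vertexConnectivity G ≤ S.1.card) := by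
  obtain ⟨F, hF, hinj, hT1, hT2⟩ := hR
  obtain ⟨hsub, hnb⟩ := hS
  have hi1 : (F.image Prod.fst).card = F.card :=
    Finset.card_image_of_injOn fun p hp q hq hpq => by
      by_contra hne; exact (hinj p hp q hq hne).1 hpq
  have hi2 : (F.image Prod.snd).card = F.card :=
    Finset.card_image_of_injOn fun p hp q hq hpq => by
      by_contra hne; exact (hinj p hp q hq hne).2 hpq
  have hd1 : Disjoint S.2 (F.image Prod.fst) := by
    rw [Finset.disjoint_right]
    intro x hx
    obtain ⟨p, hp, rfl⟩ := Finset.mem_image.1 hx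
    exact (hF p hp).2.1
  have hd2 : Disjoint S.1 (F.image Prod.snd) := by
    rw [Finset.disjoint_right]
    intro x hx
    obtain ⟨p, hp, rfl⟩ := Finset.mem_image.1 hx
    exact (hF p hp).2.2.2
  have hAsub : S.2 ∪ F.image Prod.fst ⊆ S.1 := by
    refine Finset.union_subset hsub fun x hx => ?_
    obtain ⟨p, hp, rfl⟩ := Finset.mem_image.1 hx
    exact (hF p hp).1
  have hAnb : ∀ v ∈ S.2 ∪ F.image Prod.fst, ∀ w, G.Adj v w → w ∈ S.1 := by
    intro v hv
    rcases Finset.mem_union.1 hv with hv | hv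
    · exact hnb v hv
    · obtain ⟨p, hp, rfl⟩ := Finset.mem_image.1 hv
      exact (hF p hp).2.2.1
  have hcA : (S.2 ∪ F.image Prod.fst).card = S.2.card + F.card := by
    rw [Finset.card_union_of_disjoint hd1, hi1]
  refine ⟨⟨?_, ?_⟩, F.card, ?_, ?_, ?_⟩
  · rw [hT1, hT2]; exact hAsub.trans Finset.subset_union_left
  · rw [hT1, hT2]
    exact fun v hv w hvw => Finset.mem_union_left _ (hAnb v hv w hvw)
  · rw [hT1, Finset.card_union_of_disjoint hd2, hi2]
  · rw [hT2, hcA]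
  · rcases F.eq_empty_or_nonempty with h0 | ⟨p, hp⟩
    · exact Or.inl (by simp [h0])
    · right
      have hpA : p.1 ∈ S.2 ∪ F.image Prod.fst :=
        Finset.mem_union_right _ (Finset.mem_image_of_mem _ hp)
      have hpw := (hF p hp).2.2.2
      have hκ := vertexConnectivity_le_of_separates G (S.1 \ (S.2 ∪ F.image Prod.fst))
        (· ∈ S.2 ∪ F.image Prod.fst) (a := p.1) (w := p.2)
        (fun hx => (Finset.mem_sdiff.1 hx).2 hpA)
        (fun hx => hpw (Finset.mem_sdiff.1 hx).1) hpA (fun hx => hpw (hAsub hx))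
        (fun u v _ hv huv hu => by
          by_contra hn
          exact hv (Finset.mem_sdiff.2 ⟨hAnb u hu v huv, hn⟩))
      have hcard := Finset.card_sdiff_add_card_eq_card hAsub
      omega

/-- If `t` rounds lead from a valid state with `d` unused blue vertices to the all-blue state,
then either that state was all blue already, or each round made at most `d - κ` forces. -/
lemma Reach.card_bound {G : SimpleGraph V} {t : ℕ} {S T : Finset V × Finset V}
    (hR : Reach G t S T) (hS : Valid G S) (hT : T.1 = Finset.univ) {d : ℕ}
    (hd : S.1.card = S.2.card + d) :
    Fintype.card V = S.1.card ∨
      ∃ b, d = vertexConnectivity G + b ∧ Fintype.card V ≤ S.1.card + t * b := by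
  induction t generalizing S with
  | zero =>
    left
    have hST : S = T := hR
    rw [hST, hT, Finset.card_univ]
  | succ t ih =>
    obtain ⟨U, hSU, hUT⟩ := hR
    obtain ⟨hU, k, h1, h2, h3⟩ := hSU.card_forces hS
    rcases ih hUT hU (by omega) with h | ⟨b, hb, h⟩
    · rcases h3 with rfl | h3
      · left; omega
      · refine Or.inr ⟨d - vertexConnectivity G, by omega, ?_⟩
        have : (t + 1) * (d - vertexConnectivity G)
          = t * (d - vertexConnectivity G) + (d - vertexConnectivity G) := by ring
        have := Nat.zero_le (t * (d - vertexConnectivity G))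
        omega
    · refine Or.inr ⟨b, hb, ?_⟩
      have : (t + 1) * b = t * b + b := by ring
      omega

lemma vertexConnectivity_le_card (G : SimpleGraph V) :
    vertexConnectivity G ≤ Fintype.card V := by
  refine Nat.sInf_le ⟨Finset.univ, Finset.card_univ, Or.inl fun hc => ?_⟩
  obtain ⟨x, hx⟩ := hc.nonempty
  exact hx (by simp)

lemma ceil_le_throttling (G : SimpleGraph V) :
    (⌈2 * √((Fintype.card V : ℝ) - (vertexConnectivity G : ℝ)) +
      (vertexConnectivity G : ℝ) - 1⌉₊ : ℕ∞) ≤ throttling G := by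
  refine le_iInf fun B => ?_
  by_cases hfin : propTime G B = ⊤
  · simp [hfin]
  have hne : {t : ℕ∞ | ∃ t' : ℕ, t = (t' : ℕ∞) ∧
      ∃ T, Reach G t' (B, ∅) T ∧ T.1 = Finset.univ}.Nonempty := by
    by_contra hemp
    rw [Set.not_nonempty_iff_eq_empty] at hemp
    exact hfin (by rw [propTime, hemp, sInf_empty])
  obtain ⟨t, ht, T, hR, hT⟩ := csInf_mem hne
  have hpt : propTime G B = (t : ℕ∞) := ht
  rw [hpt]
  have hκ := vertexConnectivity_le_card G
  have hb : ∃ b, B.card = vertexConnectivity G + b ∧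
      Fintype.card V ≤ vertexConnectivity G + b * (t + 1) := by
    rcases hR.card_bound (d := B.card) ⟨by simp, by simp⟩ hT (by simp) with h | ⟨b, h1, h2⟩
    · refine ⟨B.card - vertexConnectivity G, by simp at h; omega, ?_⟩
      have := Nat.le_mul_of_pos_right (B.card - vertexConnectivity G) (Nat.succ_pos t)
      simp at h
      simp at this
      omega
    · refine ⟨b, h1, ?_⟩
      have : b * (t + 1) = t * b + b := by ring
      simp at h2
      omega
  obtain ⟨b, hB, hn⟩ := hb
  have hn' : (Fintype.card V : ℝ) ≤ vertexConnectivity G + b * (t + 1) := by exact_mod_cast hn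
  have hs : √((Fintype.card V : ℝ) - vertexConnectivity G) ≤ ((b : ℝ) + (t + 1)) / 2 := by
    refine Real.sqrt_le_iff.2 ⟨by positivity, ?_⟩
    nlinarith [sq_nonneg ((b : ℝ) - (t + 1))]
  have : ⌈2 * √((Fintype.card V : ℝ) - (vertexConnectivity G : ℝ)) +
      (vertexConnectivity G : ℝ) - 1⌉₊ ≤ B.card + t := by
    refine Nat.ceil_le.2 ?_
    rw [hB]
    push_cast
    linarith
  exact_mod_cast this

/-! ### The upper bound -/

/-- If all vertices outside the independent set `I` are blue, `I` has at least `b` unused blue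
vertices and at most `k * b` vertices are white, then `k` rounds suffice. -/
lemma exists_reach_univ (G : SimpleGraph V) {I : Finset V}
    (hI : ∀ u ∈ I, ∀ v ∈ I, u ≠ v → ¬ G.Adj u v) {b : ℕ} (k : ℕ) (S : Finset V × Finset V)
    (hC : Iᶜ ⊆ S.1) (hb : b ≤ ((I ∩ S.1) \ S.2).card) (hsub : S.2 ⊆ S.1)
    (hw : (S.1)ᶜ.card ≤ k * b) :
    ∃ T, Reach G k S T ∧ T.1 = Finset.univ := by
  induction k generalizing S with
  | zero =>
    refine ⟨S, rfl, ?_⟩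
    have : (S.1)ᶜ = ∅ := Finset.card_eq_zero.1 (by omega)
    simpa using this
  | succ k ih =>
    obtain ⟨A, hAs, hA⟩ := Finset.exists_subset_card_eq
      ((min_le_left b (S.1)ᶜ.card).trans hb)
    obtain ⟨W, hWs, hW⟩ := Finset.exists_subset_card_eq (min_le_right b (S.1)ᶜ.card)
    let e : A ≃ W := Finset.equivOfCardEq (hA.trans hW.symm)
    let F : Finset (V × V) := Finset.univ.image fun a : A => ((a : V), (e a : V))
    have hF1 : F.image Prod.fst = A := by
      ext x; simp [F]
    have hF2 : F.image Prod.snd = W := by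
      ext x
      simp only [F, Finset.mem_image, Finset.mem_univ, true_and]
      constructor
      · rintro ⟨p, ⟨a, rfl⟩, rfl⟩; exact (e a).2
      · intro hx
        exact ⟨_, ⟨e.symm ⟨x, hx⟩, rfl⟩, by simp⟩
    have hA' : ∀ x ∈ A, x ∈ I ∧ x ∈ S.1 ∧ x ∉ S.2 := by
      intro x hx
      have := hAs hx
      simp only [Finset.mem_sdiff, Finset.mem_inter] at this
      tauto
    have hW' : ∀ x ∈ W, x ∉ S.1 := fun x hx => by simpa using hWs hx
    have hWI : ∀ x ∈ W, x ∈ I := by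
      intro x hx
      by_contra hn
      exact hW' x hx (hC (by simpa using hn))
    have hround : Round G S (S.1 ∪ W, S.2 ∪ A) := by
      refine ⟨F, ?_, ?_, by rw [hF2], by rw [hF1]⟩
      · intro p hp
        obtain ⟨a, -, rfl⟩ := Finset.mem_image.1 hp
        obtain ⟨haI, ha1, ha2⟩ := hA' a a.2
        refine ⟨ha1, ha2, fun w haw => ?_, hW' _ (e a).2⟩
        refine hC (Finset.mem_compl.2 fun hwI => hI a haI w hwI haw.ne haw)
      · intro p hp q hq hpq
        obtain ⟨a, -, rfl⟩ := Finset.mem_image.1 hp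
        obtain ⟨c, -, rfl⟩ := Finset.mem_image.1 hq
        have hac : a ≠ c := by rintro rfl; exact hpq rfl
        exact ⟨fun h => hac (Subtype.ext h), fun h => hac (e.injective (Subtype.ext h))⟩
    have hAsub : A ⊆ S.1 := fun x hx => (hA' x hx).2.1
    have hunused : b ≤ ((I ∩ (S.1 ∪ W)) \ (S.2 ∪ A)).card := by
      -- The unused blue vertices of `I` lose `A` and gain the equally large set `W`.
      have heq : (I ∩ (S.1 ∪ W)) \ (S.2 ∪ A) = (((I ∩ S.1) \ S.2) \ A) ∪ W := by
        ext x
        have h1 := hA' x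
        have h2 := hW' x
        have h3 := hWI x
        have h4 := @hsub x
        simp only [Finset.mem_sdiff, Finset.mem_inter, Finset.mem_union]
        tauto
      have hdis : Disjoint (((I ∩ S.1) \ S.2) \ A) W := by
        rw [Finset.disjoint_right]
        intro x hx hx'
        simp only [Finset.mem_sdiff, Finset.mem_inter] at hx'
        exact hW' x hx hx'.1.1.2
      have := Finset.card_sdiff_add_card_eq_card hAs
      rw [heq, Finset.card_union_of_disjoint hdis]
      omega
    have hwhite : (S.1 ∪ W)ᶜ.card ≤ k * b := by
      have heq : (S.1 ∪ W)ᶜ = (S.1)ᶜ \ W := by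
        ext x; simp
      have := Finset.card_sdiff_add_card_eq_card hWs
      have hk : (k + 1) * b = k * b + b := by ring
      rw [heq]
      rcases min_choice b (S.1)ᶜ.card with h | h <;> omega
    obtain ⟨T, hT, hTu⟩ := ih (S.1 ∪ W, S.2 ∪ A) (hC.trans Finset.subset_union_left) hunused
      (Finset.union_subset (hsub.trans Finset.subset_union_left)
        (hAsub.trans Finset.subset_union_left)) hwhite
    exact ⟨T, ⟨_, hround, hT⟩, hTu⟩

lemma throttling_le_of_reach (G : SimpleGraph V) {B : Finset V} {t : ℕ}
    {T : Finset V × Finset V} (hR : Reach G t (B, ∅) T) (hT : T.1 = Finset.univ) :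
    throttling G ≤ ((B.card + t : ℕ) : ℕ∞) := by
  refine (iInf_le _ B).trans ?_
  push_cast
  gcongr
  exact sInf_le ⟨t, rfl, T, hR, hT⟩

/-- Coloring the complement of a maximum independent set together with `b` of its vertices
gives `|B| = n - α + b`, and `s` rounds suffice if `α ≤ b * (s + 1)`. -/
lemma throttling_le_of_le_mul (G : SimpleGraph V) {b s : ℕ} (hb : b ≤ indepNumber G)
    (hs : indepNumber G ≤ b * (s + 1)) :
    throttling G ≤ ((Fintype.card V - indepNumber G + b + s : ℕ) : ℕ∞) := by
  obtain ⟨I, hIc, hI⟩ := exists_maximum_indep G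
  obtain ⟨J, hJs, hJ⟩ := Finset.exists_subset_card_eq (hb.trans hIc.ge)
  have hdis : Disjoint Iᶜ J := by
    rw [Finset.disjoint_right]
    intro x hx
    simpa using hJs hx
  have hB : (Iᶜ ∪ J).card = Fintype.card V - indepNumber G + b := by
    rw [Finset.card_union_of_disjoint hdis, Finset.card_compl, hIc, hJ]
  have hIJ : (I ∩ (Iᶜ ∪ J)) \ ∅ = J := by
    ext x
    have := @hJs x
    simp only [Finset.mem_sdiff, Finset.mem_inter, Finset.mem_union, Finset.mem_compl,
      Finset.notMem_empty]
    tauto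
  have hle : indepNumber G ≤ Fintype.card V := hIc ▸ Finset.card_le_univ I
  obtain ⟨T, hT, hTu⟩ := exists_reach_univ G hI (b := b) s (Iᶜ ∪ J, ∅)
    Finset.subset_union_left (by simp only [hIJ, hJ, le_refl]) (by simp) (by
      have : b * (s + 1) = s * b + b := by ring
      rw [Finset.card_compl, hB]
      omega)
  have := throttling_le_of_reach G hT hTu
  rwa [hB] at this

lemma throttling_le_ceil (G : SimpleGraph V) :
    throttling G ≤ (⌈(Fintype.card V : ℝ) - (indepNumber G : ℝ) +
      2 * √(indepNumber G : ℝ) - 1⌉₊ : ℕ∞) := by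
  obtain ⟨I, hIc, -⟩ := exists_maximum_indep G
  have hle : indepNumber G ≤ Fintype.card V := hIc ▸ Finset.card_le_univ I
  rcases isEmpty_or_nonempty V with hV | hV
  · have := throttling_le_of_le_mul G (b := 0) (s := 0) (by simp) (by
      simpa using hle)
    refine this.trans ?_
    simp
  have hpos := indepNumber_pos G
  set N := ⌈(Fintype.card V : ℝ) - (indepNumber G : ℝ) +
      2 * √(indepNumber G : ℝ) - 1⌉₊ with hN
  obtain ⟨κ, hκ⟩ := Nat.exists_eq_add_of_le' hle
  have hκ' : (Fintype.card V : ℝ) = κ + indepNumber G := by exact_mod_cast hκ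
  have hsq := Real.sq_sqrt (Nat.cast_nonneg (α := ℝ) (indepNumber G))
  have hone : (1 : ℝ) ≤ √(indepNumber G : ℝ) := by
    rw [Real.one_le_sqrt]; exact_mod_cast hpos
  have hlow : (κ : ℝ) + 2 * √(indepNumber G : ℝ) - 1 ≤ N := by
    have := Nat.le_ceil ((Fintype.card V : ℝ) - (indepNumber G : ℝ) +
      2 * √(indepNumber G : ℝ) - 1)
    rw [← hN] at this
    linarith
  have hup : N ≤ κ + indepNumber G := by
    refine Nat.ceil_le.2 ?_
    push_cast
    nlinarith [sq_nonneg (√(indepNumber G : ℝ) - 1)]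
  have hκN : κ + 1 ≤ N := by
    have : ((κ + 1 : ℕ) : ℝ) ≤ N := by push_cast; linarith
    exact_mod_cast this
  -- `m = N - κ + 1` is `⌈2 * √α⌉`.
  obtain ⟨m, hm⟩ : ∃ m, m + κ = N + 1 := ⟨N + 1 - κ, by omega⟩
  have hm2 : 4 * indepNumber G ≤ m ^ 2 := by
    have hmr : (m : ℝ) + κ = N + 1 := by exact_mod_cast hm
    have : 4 * (indepNumber G : ℝ) ≤ (m : ℝ) ^ 2 := by
      have : 2 * √(indepNumber G : ℝ) ≤ m := by linarith
      nlinarith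
    exact_mod_cast this
  refine (throttling_le_of_le_mul G (b := m / 2) (s := m - m / 2 - 1) (by omega) ?_).trans ?_
  · obtain ⟨c, hc | hc⟩ := Nat.even_or_odd' m
    · have h1 : m / 2 = c := by omega
      have h2 : m - m / 2 - 1 + 1 = c := by omega
      rw [h2, h1]
      rw [hc] at hm2
      nlinarith
    · have h1 : m / 2 = c := by omega
      have h2 : m - m / 2 - 1 + 1 = c + 1 := by omega
      rw [h2, h1]
      rw [hc] at hm2
      have : 4 * indepNumber G ≤ 4 * (c * (c + 1)) + 1 := by linarith
      omega
  · have : Fintype.card V - indepNumber G + m / 2 + (m - m / 2 - 1) ≤ N := by omega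
    exact_mod_cast this

end

end Hopping

/-- If `G` has `n` vertices, vertex connectivity `κ`, and independence number
`α`, and `κ + α = n`, then
`th_H(G) = ⌈2√(n - κ) + κ - 1⌉ = ⌈n - α + 2√α - 1⌉`. -/
theorem hoppingThrottling_of_vertexConnectivity_add_indepNumber {V : Type*} [Fintype V]
    [DecidableEq V] (G : SimpleGraph V)
    (h : Hopping.vertexConnectivity G + Hopping.indepNumber G = Fintype.card V) :
    Hopping.throttling G =
        (⌈2 * Real.sqrt ((Fintype.card V : ℝ) - (Hopping.vertexConnectivity G : ℝ)) +
            (Hopping.vertexConnectivity G : ℝ) - 1⌉₊ : ℕ∞) ∧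
      Hopping.throttling G =
        (⌈(Fintype.card V : ℝ) - (Hopping.indepNumber G : ℝ) +
            2 * Real.sqrt (Hopping.indepNumber G : ℝ) - 1⌉₊ : ℕ∞) := by
  have hr : (Hopping.vertexConnectivity G : ℝ) + (Hopping.indepNumber G : ℝ) =
      (Fintype.card V : ℝ) := by exact_mod_cast h
  have e : (Fintype.card V : ℝ) - (Hopping.indepNumber G : ℝ) +
      2 * Real.sqrt (Hopping.indepNumber G : ℝ) - 1 =
      2 * Real.sqrt ((Fintype.card V : ℝ) - (Hopping.vertexConnectivity G : ℝ)) +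
      (Hopping.vertexConnectivity G : ℝ) - 1 := by
    rw [← hr, add_sub_cancel_right, add_sub_cancel_left]
    ring
  have hlow := Hopping.ceil_le_throttling G
  have hup := Hopping.throttling_le_ceil G
  exact ⟨le_antisymm (e ▸ hup) hlow, le_antisymm hup (e ▸ hlow)⟩
end

section
/- For every finite simple graph G on n vertices, th_H(G) = n if and only if G contains no induced subgraph isomorphic to 2K_2 (two disjoint edges), K_2 ∪ \bar{K_2} (one edge together with two isolated vertices), or \bar{K_4} (four isolated vertices); equivalently, th_H(G) < n if and only if there exist four distinct vertices u, v, x, y of G such that none of the pairs {x,u}, {x,v}, {y,u}, {y,v} is an edge of G. -/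
/-- Two disjoint edges, `2K₂`. -/
def twoK2 : SimpleGraph (Fin 4) :=
  SimpleGraph.fromRel (fun i j => (i = 0 ∧ j = 1) ∨ (i = 2 ∧ j = 3))

/-- One edge together with two isolated vertices, `K₂ ∪ K̄₂`. -/
def K2Union2K1 : SimpleGraph (Fin 4) :=
  SimpleGraph.fromRel (fun i j => i = 0 ∧ j = 1)

/-- `G` contains an induced subgraph isomorphic to `H`. -/
def ContainsInduced {V : Type*} {W : Type*} (G : SimpleGraph V) (H : SimpleGraph W) : Prop :=
  ∃ s : Set V, Nonempty (G.induce s ≃g H)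

/-- Four distinct vertices `u, v, x, y` with no edge between `{x, y}` and `{u, v}`. -/
def CrossFree {V : Type*} (G : SimpleGraph V) (u v x y : V) : Prop :=
  u ≠ v ∧ u ≠ x ∧ u ≠ y ∧ v ≠ x ∧ v ≠ y ∧ x ≠ y ∧
    ¬ G.Adj x u ∧ ¬ G.Adj x v ∧ ¬ G.Adj y u ∧ ¬ G.Adj y v

namespace Hopping

variable {V : Type*} [DecidableEq V]

/-- Two forces in the same round would give a cross-free quadruple: the forcing vertices have only
blue neighbors, while the forced vertices are white. -/
lemma Round.card_le {G : SimpleGraph V} (hG : ¬ ∃ u v x y, CrossFree G u v x y)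
    {S T : Finset V × Finset V} (h : Round G S T) : T.1.card ≤ S.1.card + 1 := by
  obtain ⟨F, hF, hne, hT, -⟩ := h
  have hF1 : F.card ≤ 1 := by
    rw [Finset.card_le_one]
    intro p hp q hq
    by_contra hpq
    obtain ⟨h1, h2⟩ := hne p hp q hq hpq
    obtain ⟨pb, -, pn, pw⟩ := hF p hp
    obtain ⟨qb, -, qn, qw⟩ := hF q hq
    refine hG ⟨p.2, q.2, p.1, q.1, h2, ?_, ?_, ?_, ?_, h1, fun h => pw (pn _ h),
      fun h => qw (pn _ h), fun h => pw (qn _ h), fun h => qw (qn _ h)⟩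
    · intro h; rw [h] at pw; exact pw pb
    · intro h; rw [h] at pw; exact pw qb
    · intro h; rw [h] at qw; exact qw pb
    · intro h; rw [h] at qw; exact qw qb
  rw [hT]
  exact (Finset.card_union_le _ _).trans
    (Nat.add_le_add_left (Finset.card_image_le.trans hF1) _)

lemma Reach.card_le {G : SimpleGraph V} (hG : ¬ ∃ u v x y, CrossFree G u v x y)
    {t : ℕ} {S T : Finset V × Finset V} (h : Reach G t S T) : T.1.card ≤ S.1.card + t := by
  induction t generalizing S with
  | zero => cases h; simp
  | succ t ih =>
    obtain ⟨U, hU, hUT⟩ := h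
    have h1 := hU.card_le hG
    have h2 := ih hUT
    omega

variable [Fintype V]

lemma propTime_le {G : SimpleGraph V} {B : Finset V} {t : ℕ} {T : Finset V × Finset V}
    (h : Reach G t (B, ∅) T) (hT : T.1 = Finset.univ) : propTime G B ≤ t :=
  sInf_le ⟨t, rfl, T, h, hT⟩

lemma throttling_le_card (G : SimpleGraph V) : throttling G ≤ (Fintype.card V : ℕ∞) := by
  refine (iInf_le _ Finset.univ).trans ?_
  have h : propTime G Finset.univ ≤ ((0 : ℕ) : ℕ∞) := propTime_le (T := (Finset.univ, ∅)) rfl rfl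
  simpa using add_le_add_right h (Fintype.card V : ℕ∞)

lemma card_le_throttling {G : SimpleGraph V} (hG : ¬ ∃ u v x y, CrossFree G u v x y) :
    (Fintype.card V : ℕ∞) ≤ throttling G := by
  refine le_iInf fun B => ?_
  -- `Fintype.card V - B.card ≤ propTime G B`, with truncated subtraction harmless for a lower bound.
  rw [← tsub_le_iff_left]
  refine le_sInf ?_
  rintro _ ⟨t, rfl, T, hR, hT⟩
  have h := hR.card_le hG
  rw [hT, Finset.card_univ] at h
  rw [tsub_le_iff_left]
  exact_mod_cast h

lemma throttling_lt_of_crossFree {G : SimpleGraph V} {u v x y : V} (h : CrossFree G u v x y) :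
    throttling G < (Fintype.card V : ℕ∞) := by
  obtain ⟨huv, hux, huy, hvx, hvy, hxy, h1, h2, h3, h4⟩ := h
  set B : Finset V := Finset.univ \ {u, v} with hB
  have hR : Reach G 1 (B, ∅) (Finset.univ, {x, y}) := by
    refine ⟨_, ⟨{(x, u), (y, v)}, ?_, ?_, ?_, ?_⟩, rfl⟩
    · simp only [Finset.mem_insert, Finset.mem_singleton, hB]
      rintro p (rfl | rfl)
      · refine ⟨by simp [hux.symm, hvx.symm], by simp, fun w hw => ?_, by simp⟩
        have hwu : w ≠ u := by rintro rfl; exact h1 hw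
        have hwv : w ≠ v := by rintro rfl; exact h2 hw
        simp [hwu, hwv]
      · refine ⟨by simp [huy.symm, hvy.symm], by simp, fun w hw => ?_, by simp⟩
        have hwu : w ≠ u := by rintro rfl; exact h3 hw
        have hwv : w ≠ v := by rintro rfl; exact h4 hw
        simp [hwu, hwv]
    · simp only [Finset.mem_insert, Finset.mem_singleton]
      rintro p (rfl | rfl) q (rfl | rfl) hpq
      · exact absurd rfl hpq
      · exact ⟨hxy, huv⟩
      · exact ⟨hxy.symm, huv.symm⟩
      · exact absurd rfl hpq
    · ext w
      simp [hB, Finset.image_insert]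
      tauto
    · simp [Finset.image_insert]
  have hcard : B.card + 2 = Fintype.card V := by
    have := Finset.card_sdiff_add_card_eq_card (Finset.subset_univ ({u, v} : Finset V))
    rwa [Finset.card_pair huv, Finset.card_univ] at this
  calc throttling G ≤ (B.card : ℕ∞) + propTime G B := iInf_le _ B
    _ ≤ (B.card : ℕ∞) + (1 : ℕ) := by gcongr; exact propTime_le hR rfl
    _ < (Fintype.card V : ℕ∞) := by
      rw [← hcard]
      exact_mod_cast Nat.lt_succ_self (B.card + 1)

lemma throttling_lt_iff (G : SimpleGraph V) :
    throttling G < (Fintype.card V : ℕ∞) ↔ ∃ u v x y, CrossFree G u v x y := by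
  refine ⟨fun h => ?_, fun ⟨u, v, x, y, h⟩ => throttling_lt_of_crossFree h⟩
  by_contra hG
  exact absurd h (card_le_throttling hG).not_gt

end Hopping

lemma containsInduced_iff_nonempty_embedding {V W : Type*} (G : SimpleGraph V)
    (H : SimpleGraph W) : ContainsInduced G H ↔ Nonempty (H ↪g G) := by
  constructor
  · rintro ⟨s, ⟨e⟩⟩
    exact ⟨(SimpleGraph.Embedding.induce s).comp e.symm.toEmbedding⟩
  · rintro ⟨f⟩
    exact ⟨Set.range f, ⟨f.isoInduceRange.symm⟩⟩

/-- A graph on `Fin 4` with no edge between `{0, 1}` and `{2, 3}` is induced by four vertices of `G`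
with the same pattern. -/
lemma containsInduced_of_crossFree {V : Type*} {G : SimpleGraph V} {H : SimpleGraph (Fin 4)}
    {u v x y : V} (h : CrossFree G u v x y)
    (h01 : H.Adj 0 1 ↔ G.Adj x y) (h23 : H.Adj 2 3 ↔ G.Adj u v)
    (h02 : ¬ H.Adj 0 2) (h03 : ¬ H.Adj 0 3) (h12 : ¬ H.Adj 1 2) (h13 : ¬ H.Adj 1 3) :
    ContainsInduced G H := by
  obtain ⟨huv, hux, huy, hvx, hvy, hxy, h1, h2, h3, h4⟩ := h
  rw [containsInduced_iff_nonempty_embedding]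
  refine ⟨⟨⟨![x, y, u, v], ?_⟩, ?_⟩⟩
  · intro i j hij
    fin_cases i <;> fin_cases j <;> simp_all [eq_comm]
  · intro i j
    change G.Adj (![x, y, u, v] i) (![x, y, u, v] j) ↔ H.Adj i j
    fin_cases i <;> fin_cases j <;> simp_all [G.adj_comm, H.adj_comm] <;>
      rw [H.adj_comm 1 0, h01]

lemma ContainsInduced.exists_crossFree {V : Type*} {G : SimpleGraph V} {H : SimpleGraph (Fin 4)}
    (h : ContainsInduced G H)
    (h02 : ¬ H.Adj 0 2) (h03 : ¬ H.Adj 0 3) (h12 : ¬ H.Adj 1 2) (h13 : ¬ H.Adj 1 3) :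
    ∃ u v x y, CrossFree G u v x y := by
  rw [containsInduced_iff_nonempty_embedding] at h
  obtain ⟨f⟩ := h
  refine ⟨f 2, f 3, f 0, f 1, ?_⟩
  simp [CrossFree, f.map_adj_iff, h02, h03, h12, h13]

lemma crossFree_iff_containsInduced {V : Type*} (G : SimpleGraph V) :
    (∃ u v x y, CrossFree G u v x y) ↔
      ContainsInduced G twoK2 ∨ ContainsInduced G K2Union2K1 ∨
        ContainsInduced G (⊥ : SimpleGraph (Fin 4)) := by
  constructor
  · rintro ⟨u, v, x, y, h⟩
    by_cases hxy : G.Adj x y <;> by_cases huv : G.Adj u v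
    · exact Or.inl (containsInduced_of_crossFree h (by simp [twoK2, hxy]) (by simp [twoK2, huv])
        (by simp [twoK2]) (by simp [twoK2]) (by simp [twoK2]) (by simp [twoK2]))
    · exact Or.inr (Or.inl (containsInduced_of_crossFree h (by simp [K2Union2K1, hxy])
        (by simp [K2Union2K1, huv]) (by simp [K2Union2K1]) (by simp [K2Union2K1])
        (by simp [K2Union2K1]) (by simp [K2Union2K1])))
    · -- The only edge is `uv`, so the two pairs exchange their roles.
      have h' : CrossFree G x y u v := by
        obtain ⟨huv, hux, huy, hvx, hvy, hxy, h1, h2, h3, h4⟩ := h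
        exact ⟨hxy, hux.symm, hvx.symm, huy.symm, hvy.symm, huv, fun h => h1 h.symm,
          fun h => h3 h.symm, fun h => h2 h.symm, fun h => h4 h.symm⟩
      exact Or.inr (Or.inl (containsInduced_of_crossFree h' (by simp [K2Union2K1, huv])
        (by simp [K2Union2K1, hxy]) (by simp [K2Union2K1]) (by simp [K2Union2K1])
        (by simp [K2Union2K1]) (by simp [K2Union2K1])))
    · exact Or.inr (Or.inr (containsInduced_of_crossFree h (by simp [hxy]) (by simp [huv])
        (by simp) (by simp) (by simp) (by simp)))
  · rintro (h | h | h)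
    · exact h.exists_crossFree (by simp [twoK2]) (by simp [twoK2]) (by simp [twoK2])
        (by simp [twoK2])
    · exact h.exists_crossFree (by simp [K2Union2K1]) (by simp [K2Union2K1])
        (by simp [K2Union2K1]) (by simp [K2Union2K1])
    · exact h.exists_crossFree (by simp) (by simp) (by simp) (by simp)

/-- `th_H(G) = n` iff `G` contains no induced subgraph isomorphic to `2K₂`,
`K₂ ∪ K̄₂`, or `K̄₄`; equivalently, `th_H(G) < n` iff there are four distinct
vertices `u, v, x, y` with none of `xu`, `xv`, `yu`, `yv` an edge of `G`. -/
theorem hoppingThrottling_eq_card_iff {V : Type*} [Fintype V] [DecidableEq V]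
    (G : SimpleGraph V) :
    (Hopping.throttling G = (Fintype.card V : ℕ∞) ↔
        ¬ ContainsInduced G twoK2 ∧ ¬ ContainsInduced G K2Union2K1 ∧
          ¬ ContainsInduced G (⊥ : SimpleGraph (Fin 4))) ∧
      (Hopping.throttling G < (Fintype.card V : ℕ∞) ↔
        ∃ u v x y : V, u ≠ v ∧ u ≠ x ∧ u ≠ y ∧ v ≠ x ∧ v ≠ y ∧ x ≠ y ∧
          ¬ G.Adj x u ∧ ¬ G.Adj x v ∧ ¬ G.Adj y u ∧ ¬ G.Adj y v) := by
  refine ⟨?_, Hopping.throttling_lt_iff G⟩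
  have hle := Hopping.throttling_le_card G
  rw [← not_or, ← not_or, ← crossFree_iff_containsInduced, ← Hopping.throttling_lt_iff, not_lt]
  exact ⟨fun h => h.ge, fun h => le_antisymm hle h⟩
end
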